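/- arXiv:1908.01008 — 2 statements merged into one kernel-verified Lean document; each statement's English description precedes it below -/
import Mathlib

section
/- Let u be an information structure on K × C × D that exhibits ε-knowledge of the state, i.e. there is a map κ : C ∪ D → K such that u({(k,c,d) : u(k = κ(c) | c) ≥ 1−ε}) ≥ 1−ε and u({(k,c,d) : u(k = κ(d) | d) ≥ 1−ε}) ≥ 1−ε. Let v be the information structure on K × K_C × K_D with K_C = K_D = K, marg_K v = marg_K u, and v(k = k_C = k_D) = 1 (common knowledge of the state). Then d(u,v) ≤ 20ε. -/
open scoped BigOperators ENNReal

namespace ValueDistance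

/-- An information structure: a probability distribution on `K × ℕ × ℕ`
(state, signal of player 1, signal of player 2). -/
abbrev InfoStruct (K : Type) := PMF (K × ℕ × ℕ)

/-- A behavior strategy / garbling : a map `ℕ → Δ(ℕ)`. -/
abbrev Garbling : Type := ℕ → PMF ℕ

variable {K : Type}

/-- `g` is a payoff function with action bound `L` : values in `[-1,1]`,
`g k i j = -1` when `i ≥ L`, and `g k i j = 1` when `i < L` and `j ≥ L`. -/
def IsPayoffL (L : ℕ) (g : K → ℕ → ℕ → ℝ) : Prop :=
  (∀ k i j, g k i j ∈ Set.Icc (-1 : ℝ) 1) ∧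
  (∀ k i j, L ≤ i → g k i j = -1) ∧
  (∀ k i j, i < L → L ≤ j → g k i j = 1)

/-- `g` belongs to the set `𝒢` of payoff functions. -/
def IsPayoff (g : K → ℕ → ℕ → ℝ) : Prop := ∃ L, IsPayoffL L g

/-- `g` belongs to the set `𝒢₁` of single-agent (player 1) problems. -/
def IsPayoff1 (g : K → ℕ → ℕ → ℝ) : Prop :=
  IsPayoff g ∧ ∀ k i j j', g k i j = g k i j'

/-- Expected payoff in the Bayesian game `Γ(u,g)` when player 1 uses the behavior
strategy `σ` and player 2 uses `τ`. -/
noncomputable def payoff (u : InfoStruct K) (g : K → ℕ → ℕ → ℝ)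
    (σ τ : Garbling) : ℝ :=
  ∑' (x : K × ℕ × ℕ) (i : ℕ) (j : ℕ),
    (u x).toReal * (σ x.2.1 i).toReal * (τ x.2.2 j).toReal * g x.1 i j

/-- The value `val(u,g)` of the zero-sum Bayesian game `Γ(u,g)`
(the common value of `sup inf` and `inf sup` of the expected payoff;
we take `sup inf` as the definition). -/
noncomputable def val (u : InfoStruct K) (g : K → ℕ → ℕ → ℝ) : ℝ :=
  ⨆ σ : Garbling, ⨅ τ : Garbling, payoff u g σ τ

/-- Total variation distance `‖u − v‖`. -/
noncomputable def tv {α : Type} (u v : PMF α) : ℝ :=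
  ∑' x : α, |(u x).toReal - (v x).toReal|

/-- `q.u` : player 1's signal garbled through `q`. -/
noncomputable def garbleLeft (q : Garbling) (u : InfoStruct K) : InfoStruct K :=
  u.bind (fun x => (q x.2.1).map (fun c => (x.1, c, x.2.2)))

/-- `u.q` : player 2's signal garbled through `q`. -/
noncomputable def garbleRight (u : InfoStruct K) (q : Garbling) : InfoStruct K :=
  u.bind (fun x => (q x.2.2).map (fun d => (x.1, x.2.1, d)))

/-- The value-based distance `d(u,v) = sup_{g ∈ 𝒢} |val(u,g) − val(v,g)|`. -/
noncomputable def dVal (u v : InfoStruct K) : ℝ :=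
  ⨆ g : {g : K → ℕ → ℕ → ℝ // IsPayoff g}, |val u g.1 - val v g.1|

/-- The single-agent distance `d₁(u,v) = sup_{g ∈ 𝒢₁} |val(u,g) − val(v,g)|`. -/
noncomputable def d1 (u v : InfoStruct K) : ℝ :=
  ⨆ g : {g : K → ℕ → ℕ → ℝ // IsPayoff1 g}, |val u g.1 - val v g.1|

/-- Marginal of an information structure on `K × ℕ` (state, player 1's signal). -/
noncomputable def marg1 (u : InfoStruct K) : PMF (K × ℕ) :=
  u.map (fun x => (x.1, x.2.1))

/-- Garbling of a single-agent information structure: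
`(q.w)(k,c) = Σ_s w(k,s)·q(s)({c})`. -/
noncomputable def garble1 (q : Garbling) (w : PMF (K × ℕ)) : PMF (K × ℕ) :=
  w.bind (fun x => (q x.2).map (fun c => (x.1, c)))

/-- Marginal of an information structure on the states. -/
noncomputable def margK (u : InfoStruct K) : PMF K := u.map Prod.fst

/-- Marginal of an information structure on `K × ℕ` (state, player 2's signal). -/
noncomputable def margKD (u : InfoStruct K) : PMF (K × ℕ) :=
  u.map (fun x => (x.1, x.2.2))

/-- `σ.q` : on signal `c`, draw `c'` according to `q(c)` and play `σ(c')`. -/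
noncomputable def compGarble (σ q : Garbling) : Garbling :=
  fun c => (q c).bind σ

/-- `u ∈ 𝒰(L)` : both players' signals are `< L` with probability 1. -/
def InU (L : ℕ) (u : InfoStruct K) : Prop :=
  ∀ x : K × ℕ × ℕ, u x ≠ 0 → x.2.1 < L ∧ x.2.2 < L

/-- `q ∈ 𝒬(L)` : garbling with values supported on `{0,…,L−1}`. -/
def GarblingIn (L : ℕ) (q : Garbling) : Prop :=
  ∀ n m, q n m ≠ 0 → m < L

/-- The two players' signals are conditionally independent given the state:
`u(k)·u(k,c,d) = u(k,c)·u(k,d)` for all `k, c, d`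
(equivalently `u(c,d|k) = u(c|k)·u(d|k)` whenever `u(k) > 0`). -/
def CondIndep (u : InfoStruct K) : Prop :=
  ∀ (k : K) (c d : ℕ),
    (∑' y : ℕ × ℕ, u (k, y)) * u (k, c, d)
      = (∑' d' : ℕ, u (k, c, d')) * (∑' c' : ℕ, u (k, c', d))

end ValueDistance

namespace ValueDistance

/-- `u(k = κ(c) | c)` : conditional probability, given player 1's signal `c`,
that the state equals `κ(c)`. -/
noncomputable def condStateC (u : InfoStruct K) (κ : ℕ → K) (c : ℕ) : ℝ :=
  (∑' d : ℕ, u (κ c, c, d)).toReal / (∑' (k : K) (d : ℕ), u (k, c, d)).toReal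

/-- `u(k = κ(d) | d)` : conditional probability, given player 2's signal `d`,
that the state equals `κ(d)`. -/
noncomputable def condStateD (u : InfoStruct K) (κ : ℕ → K) (d : ℕ) : ℝ :=
  (∑' c : ℕ, u (κ d, c, d)).toReal / (∑' (k : K) (c : ℕ), u (k, c, d)).toReal

/-!
Garbling a player's own signal never helps that player, so `val u ≤ val v + ‖u.q₂ - q₁.v‖` for
all garblings `q₁`, `q₂`. Let `v` be the common-knowledge structure. Garbling player 1's signal
`c` in `u` into `e (κ c)` gives the law of `(k, e (κ c), d)`. Garbling player 2's signal in `v`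
into a draw of `d` from its law in `u` given the state gives the law of `(k, e k, d)`. The two
agree unless the guess `κ c` is wrong, which under `ε`-knowledge has probability at most `2ε`.
Hence `val v ≤ val u + 4ε`, and exchanging the players gives the reverse inequality.
-/

section Expectation

variable {α β : Type*}

lemma hasSum_toReal_of_tsum_ne_top {f : α → ℝ≥0∞} (hf : ∑' a, f a ≠ ⊤) :
    HasSum (fun a => (f a).toReal) (∑' a, f a).toReal := by
  rw [ENNReal.tsum_toReal_eq (ENNReal.ne_top_of_tsum_ne_top hf)]
  exact ENNReal.hasSum_toReal hf

lemma hasSum_toReal (p : PMF α) : HasSum (fun a => (p a).toReal) 1 := by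
  simpa only [p.tsum_coe, ENNReal.toReal_one] using hasSum_toReal_of_tsum_ne_top p.tsum_coe_ne_top

lemma summable_abs_toReal_sub (p q : PMF α) :
    Summable fun a => |(p a).toReal - (q a).toReal| :=
  ((hasSum_toReal p).summable.sub (hasSum_toReal q).summable).abs

/-- The expectation of `f` under `p`, with the junk value `0` when the series is not summable. -/
noncomputable def expect (p : PMF α) (f : α → ℝ) : ℝ :=
  ∑' a, (p a).toReal * f a

lemma norm_toReal_mul_le (p : PMF α) {f : α → ℝ} {B : ℝ} (hf : ∀ a, |f a| ≤ B) (a : α) :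
    ‖(p a).toReal * f a‖ ≤ (p a).toReal * B := by
  rw [norm_mul, Real.norm_of_nonneg ENNReal.toReal_nonneg]
  exact mul_le_mul_of_nonneg_left (hf a) ENNReal.toReal_nonneg

lemma summable_toReal_mul (p : PMF α) {f : α → ℝ} {B : ℝ} (hf : ∀ a, |f a| ≤ B) :
    Summable (fun a => (p a).toReal * f a) :=
  .of_norm_bounded ((hasSum_toReal p).summable.mul_right B) (norm_toReal_mul_le p hf)

lemma abs_expect_le (p : PMF α) {f : α → ℝ} {B : ℝ} (hf : ∀ a, |f a| ≤ B) :
    |expect p f| ≤ B :=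
  tsum_of_norm_bounded (by simpa only [one_mul] using (hasSum_toReal p).mul_right B)
    (norm_toReal_mul_le p hf)

lemma expect_pure (a : α) (f : α → ℝ) : expect (PMF.pure a) f = f a := by
  rw [expect, tsum_eq_single a fun b hb => by simp [hb]]
  simp

lemma toReal_bind_apply (p : PMF α) (q : α → PMF β) (b : β) :
    (p.bind q b).toReal = ∑' a, (p a).toReal * (q a b).toReal := by
  simp only [PMF.bind_apply, ENNReal.tsum_toReal_eq fun a =>
    ENNReal.mul_ne_top (p.apply_ne_top a) ((q a).apply_ne_top b), ENNReal.toReal_mul]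

lemma summable_toReal_mul_toReal (p : PMF α) (q : α → PMF β) :
    Summable (fun x : α × β => (p x.1).toReal * (q x.1 x.2).toReal) := by
  have total : ∑' x : α × β, p x.1 * q x.1 x.2 = 1 := by
    simp only [ENNReal.tsum_prod', ENNReal.tsum_mul_left, PMF.tsum_coe, mul_one]
  simpa only [ENNReal.toReal_mul] using
    ENNReal.summable_toReal (total.trans_ne ENNReal.one_ne_top)

lemma expect_bind (p : PMF α) (q : α → PMF β) {f : β → ℝ} {B : ℝ} (hf : ∀ b, |f b| ≤ B) :
    expect (p.bind q) f = expect p (fun a => expect (q a) f) := by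
  have summable : Summable fun x : α × β => (p x.1).toReal * (q x.1 x.2).toReal * f x.2 := by
    refine .of_norm_bounded ((summable_toReal_mul_toReal p q).mul_right B) fun x => ?_
    rw [norm_mul, Real.norm_of_nonneg (by positivity)]
    exact mul_le_mul_of_nonneg_left (hf x.2) (by positivity)
  calc expect (p.bind q) f = ∑' b, ∑' a, (p a).toReal * (q a b).toReal * f b := by
        simp only [expect, toReal_bind_apply, tsum_mul_right]
    _ = ∑' a, ∑' b, (p a).toReal * (q a b).toReal * f b := summable.tsum_comm
    _ = expect p (fun a => expect (q a) f) := by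
        simp only [expect, mul_assoc, tsum_mul_left]

lemma expect_map (p : PMF α) (s : α → β) {f : β → ℝ} {B : ℝ} (hf : ∀ b, |f b| ≤ B) :
    expect (p.map s) f = expect p (f ∘ s) := by
  rw [← PMF.bind_pure_comp, expect_bind p _ hf]
  simp only [Function.comp_def, expect_pure]

lemma abs_expect_sub_expect_le {α : Type} (p q : PMF α) {f : α → ℝ} {B : ℝ}
    (hf : ∀ a, |f a| ≤ B) :
    |expect p f - expect q f| ≤ B * tv p q := by
  rw [expect, expect, ← (summable_toReal_mul p hf).tsum_sub (summable_toReal_mul q hf), mul_comm,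
    ← Real.norm_eq_abs]
  refine tsum_of_norm_bounded ((summable_abs_toReal_sub p q).hasSum.mul_right B) fun a => ?_
  rw [← sub_mul, norm_mul, ← Real.norm_eq_abs]
  exact mul_le_mul_of_nonneg_left (hf a) (norm_nonneg _)

end Expectation

section Probability

variable {α β γ : Type*}

/-- The probability of the event `S` under `p`, as a real number. -/
noncomputable def prob (p : PMF α) (S : Set α) : ℝ :=
  (p.toOuterMeasure S).toReal

lemma toOuterMeasure_ne_top (p : PMF α) (S : Set α) : p.toOuterMeasure S ≠ ⊤ := by
  rw [PMF.toOuterMeasure_apply]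
  exact p.tsum_coe_indicator_ne_top S

lemma hasSum_prob (p : PMF α) (S : Set α) :
    HasSum (S.indicator fun a => (p a).toReal) (prob p S) := by
  have indicator_toReal : (S.indicator fun a => (p a).toReal) =
      fun a => (S.indicator p a).toReal := by
    ext a
    by_cases ha : a ∈ S <;> simp [ha]
  rw [indicator_toReal, prob, PMF.toOuterMeasure_apply]
  exact hasSum_toReal_of_tsum_ne_top (p.tsum_coe_indicator_ne_top S)

lemma prob_mono (p : PMF α) {S T : Set α} (h : S ⊆ T) : prob p S ≤ prob p T :=
  ENNReal.toReal_mono (toOuterMeasure_ne_top p T) (MeasureTheory.measure_mono h)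

lemma prob_add_prob_compl (p : PMF α) (S : Set α) : prob p S + prob p Sᶜ = 1 := by
  refine ((hasSum_prob p S).add (hasSum_prob p Sᶜ)).unique ?_
  simpa only [Set.indicator_self_add_compl_apply] using hasSum_toReal p

lemma prob_nonneg (p : PMF α) (S : Set α) : 0 ≤ prob p S :=
  ENNReal.toReal_nonneg

lemma prob_le_one (p : PMF α) (S : Set α) : prob p S ≤ 1 := by
  linarith [prob_add_prob_compl p S, prob_nonneg p Sᶜ]

lemma prob_map (p : PMF α) (f : α → β) (S : Set β) : prob (p.map f) S = prob p (f ⁻¹' S) := by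
  rw [prob, prob, PMF.toOuterMeasure_map_apply]

lemma prob_le_prob_add_diff (p : PMF α) (S T : Set α) :
    prob p S ≤ prob p T + prob p (S \ T) := by
  rw [prob, prob, prob, ← ENNReal.toReal_add (toOuterMeasure_ne_top p T)
    (toOuterMeasure_ne_top p (S \ T))]
  refine ENNReal.toReal_mono
    (ENNReal.add_ne_top.2 ⟨toOuterMeasure_ne_top p T, toOuterMeasure_ne_top p (S \ T)⟩) ?_
  calc p.toOuterMeasure S ≤ p.toOuterMeasure (T ∪ S \ T) :=
        MeasureTheory.measure_mono (Set.union_sdiff_self.symm ▸ Set.subset_union_right)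
    _ ≤ p.toOuterMeasure T + p.toOuterMeasure (S \ T) := MeasureTheory.measure_union_le _ _

lemma abs_prob_sub_prob_le (p : PMF α) (S T : Set α) :
    |prob p S - prob p T| ≤ prob p (S \ T) + prob p (T \ S) := by
  rw [abs_sub_le_iff]
  constructor <;>
    linarith [prob_le_prob_add_diff p S T, prob_le_prob_add_diff p T S,
      prob_nonneg p (S \ T), prob_nonneg p (T \ S)]

lemma toReal_map_apply (p : PMF α) (f : α → β) (b : β) :
    (p.map f b).toReal = prob p (f ⁻¹' {b}) := by
  rw [← PMF.toOuterMeasure_apply_singleton, PMF.toOuterMeasure_map_apply, prob]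

lemma map_apply_eq_tsum_of_range_eq (p : PMF α) (f : α → β) (b : β) {ι : γ → α}
    (hι : Function.Injective ι) (range_eq : Set.range ι = f ⁻¹' {b}) :
    p.map f b = ∑' c, p (ι c) := by
  have f_ι (c : γ) : ι c ∈ f ⁻¹' {b} := range_eq ▸ Set.mem_range_self c
  rw [← PMF.toOuterMeasure_apply_singleton, PMF.toOuterMeasure_map_apply,
    PMF.toOuterMeasure_apply, ← hι.tsum_eq (range_eq ▸ Set.support_indicator_subset)]
  exact tsum_congr fun c => Set.indicator_of_mem (f_ι c) p

lemma hasSum_prob_fiber_inter (p : PMF α) (f : α → β) (S : Set α) :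
    HasSum (fun b => prob p (f ⁻¹' {b} ∩ S)) (prob p S) := by
  have tsum_fibers : ∑' b, p.toOuterMeasure (f ⁻¹' {b} ∩ S) = p.toOuterMeasure S := by
    simp only [PMF.toOuterMeasure_apply]
    rw [ENNReal.tsum_comm]
    refine tsum_congr fun a => ?_
    rw [tsum_eq_single (f a) fun b hb => Set.indicator_of_notMem (fun ha => hb ha.1.symm) _,
      ← Set.indicator_indicator, Set.indicator_of_mem (by rfl)]
  rw [prob, ← tsum_fibers]
  exact hasSum_toReal_of_tsum_ne_top (tsum_fibers.trans_ne (toOuterMeasure_ne_top p S))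

lemma tv_map_le {β : Type} (p : PMF α) (f h : α → β) :
    tv (p.map f) (p.map h) ≤ 2 * prob p {a | f a ≠ h a} := by
  set D := {a | f a ≠ h a}
  rw [two_mul]
  refine hasSum_le (fun b => ?_) (summable_abs_toReal_sub _ _).hasSum
    ((hasSum_prob_fiber_inter p f D).add (hasSum_prob_fiber_inter p h D))
  calc |(p.map f b).toReal - (p.map h b).toReal|
      ≤ prob p (f ⁻¹' {b} \ h ⁻¹' {b}) + prob p (h ⁻¹' {b} \ f ⁻¹' {b}) := by
        simpa only [toReal_map_apply] using abs_prob_sub_prob_le p (f ⁻¹' {b}) (h ⁻¹' {b})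
    _ ≤ prob p (f ⁻¹' {b} ∩ D) + prob p (h ⁻¹' {b} ∩ D) :=
        add_le_add
          (prob_mono p fun _ ha => ⟨ha.1, fun heq => ha.2 (heq.symm.trans ha.1)⟩)
          (prob_mono p fun _ ha => ⟨ha.1, fun heq => ha.2 (heq.trans ha.1)⟩)

open Classical in
/-- The conditional law of `a` given `f a = b` under `p`; when `f a = b` has probability `0`
the value is irrelevant and we take `p`. -/
noncomputable def condLaw (p : PMF α) (f : α → β) (b : β) : PMF α :=
  if h : ∃ a ∈ f ⁻¹' {b}, a ∈ p.support then p.filter (f ⁻¹' {b}) h else p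

lemma map_apply_mul_condLaw (p : PMF α) (f : α → β) (b : β) (a : α) :
    p.map f b * condLaw p f b a = (f ⁻¹' {b}).indicator p a := by
  have map_apply : p.map f b = ∑' a, (f ⁻¹' {b}).indicator p a := by
    rw [← PMF.toOuterMeasure_apply_singleton, PMF.toOuterMeasure_map_apply,
      PMF.toOuterMeasure_apply]
  by_cases h : ∃ a ∈ f ⁻¹' {b}, a ∈ p.support
  · obtain ⟨a₀, ha₀, hpa₀⟩ := h
    have map_ne_zero : p.map f b ≠ 0 :=
      (PMF.mem_support_iff _ _).1 ((PMF.mem_support_map_iff _ _ _).2 ⟨a₀, hpa₀, ha₀⟩)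
    rw [condLaw, dif_pos ⟨a₀, ha₀, hpa₀⟩, PMF.filter_apply, ← map_apply, mul_left_comm,
      ENNReal.mul_inv_cancel map_ne_zero ((p.map f).apply_ne_top b), mul_one]
  · have indicator_eq_zero (a : α) : (f ⁻¹' {b}).indicator p a = 0 :=
      Set.indicator_apply_eq_zero.2 fun ha => (p.apply_eq_zero_iff a).2 fun hpa => h ⟨a, ha, hpa⟩
    simp only [map_apply, indicator_eq_zero, tsum_zero, zero_mul]

lemma bind_condLaw_map (p : PMF α) (f : α → β) (F : β → α → γ) :
    p.bind (fun a => (condLaw p f (f a)).map (F (f a))) = p.map (fun a => F (f a) a) := by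
  classical
  have resample : (p.map f).bind (fun b => (condLaw p f b).map (F b)) =
      p.map (fun a => F (f a) a) := by
    ext c
    calc ∑' b, p.map f b * (condLaw p f b).map (F b) c
        = ∑' b, ∑' a, if c = F b a then (f ⁻¹' {b}).indicator p a else 0 := by
          refine tsum_congr fun b => ?_
          rw [PMF.map_apply (F b), ← ENNReal.tsum_mul_left]
          simp only [mul_ite, mul_zero, map_apply_mul_condLaw]
      _ = ∑' a, ∑' b, if c = F b a then (f ⁻¹' {b}).indicator p a else 0 := ENNReal.tsum_comm
      _ = ∑' a, if c = F (f a) a then p a else 0 := by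
          refine tsum_congr fun a => ?_
          rw [tsum_eq_single (f a) fun b hb => ?_]
          · simp
          · simp [hb.symm]
      _ = p.map (fun a => F (f a) a) c := (PMF.map_apply _ _ _).symm
  rw [← resample, PMF.bind_map, Function.comp_def]

lemma mul_prob_le_prob_fst_eq (w : PMF (α × β)) (κ : β → α) (r : ℝ) :
    r * prob (w.map Prod.snd) {b | r ≤ (w (κ b, b)).toReal / (w.map Prod.snd b).toReal} ≤
      prob w {y | y.1 = κ y.2} := by
  have hasSum_graph : HasSum (fun b => (w (κ b, b)).toReal) (prob w {y | y.1 = κ y.2}) := by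
    have graph_injective : Function.Injective fun b => (κ b, b) :=
      fun _ _ h => congrArg Prod.snd h
    have subset_graph : {y | y.1 = κ y.2} ⊆ Set.range fun b => (κ b, b) :=
      fun y h => ⟨y.2, Prod.ext (Eq.symm h) rfl⟩
    simpa [Function.comp_def] using
      (graph_injective.hasSum_iff fun y hy => Set.indicator_of_notMem
        (fun h => hy (subset_graph h)) _).2 (hasSum_prob w {y | y.1 = κ y.2})
  refine hasSum_le (fun b => ?_) ((hasSum_prob _ _).mul_left r) hasSum_graph
  by_cases hb : b ∈ {b | r ≤ (w (κ b, b)).toReal / (w.map Prod.snd b).toReal}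
  · rw [Set.indicator_of_mem hb]
    exact mul_le_of_le_div₀ ENNReal.toReal_nonneg ENNReal.toReal_nonneg hb
  · rw [Set.indicator_of_notMem hb, mul_zero]
    exact ENNReal.toReal_nonneg

lemma prob_fst_ne_le {ε : ℝ} (w : PMF (α × β)) (κ : β → α)
    (h : 1 - ε ≤ prob (w.map Prod.snd)
      {b | 1 - ε ≤ (w (κ b, b)).toReal / (w.map Prod.snd b).toReal}) :
    prob w {y | y.1 ≠ κ y.2} ≤ 2 * ε := by
  set P := prob (w.map Prod.snd) {b | 1 - ε ≤ (w (κ b, b)).toReal / (w.map Prod.snd b).toReal}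
  have P_le_one : P ≤ 1 := prob_le_one _ _
  have error_eq : prob w {y | y.1 ≠ κ y.2} = 1 - prob w {y | y.1 = κ y.2} :=
    eq_sub_of_add_eq' (prob_add_prob_compl w {y | y.1 = κ y.2})
  calc prob w {y | y.1 ≠ κ y.2} ≤ 1 - (1 - ε) * P := by
        rw [error_eq]
        exact sub_le_sub_left (mul_prob_le_prob_fst_eq w κ (1 - ε)) 1
    _ ≤ 2 * ε := by nlinarith

end Probability

section Garbling

variable {K : Type}

lemma garbleLeft_garbleLeft (σ q : Garbling) (u : InfoStruct K) :
    garbleLeft σ (garbleLeft q u) = garbleLeft (compGarble σ q) u := by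
  simp only [garbleLeft, compGarble, PMF.bind_bind, PMF.bind_map, PMF.map_bind, Function.comp_def]

lemma garbleRight_garbleRight (u : InfoStruct K) (q τ : Garbling) :
    garbleRight (garbleRight u q) τ = garbleRight u (compGarble τ q) := by
  simp only [garbleRight, compGarble, PMF.bind_bind, PMF.bind_map, PMF.map_bind, Function.comp_def]

lemma garbleLeft_garbleRight (σ τ : Garbling) (u : InfoStruct K) :
    garbleLeft σ (garbleRight u τ) = garbleRight (garbleLeft σ u) τ := by
  simp only [garbleLeft, garbleRight, PMF.bind_bind, PMF.bind_map, Function.comp_def]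
  congr 1
  ext1 x
  simp only [← PMF.bind_pure_comp, Function.comp_def]
  exact PMF.bind_comm _ _ _

variable {g : K → ℕ → ℕ → ℝ} {B : ℝ}

lemma payoff_eq_expect (u : InfoStruct K) (g : K → ℕ → ℕ → ℝ) (σ τ : Garbling) :
    payoff u g σ τ = expect u fun x =>
      expect (σ x.2.1) fun i => expect (τ x.2.2) fun j => g x.1 i j := by
  simp only [payoff, expect, mul_assoc, tsum_mul_left]

/-- Playing `σ` and `τ` amounts to garbling the signals into actions. -/
lemma payoff_eq_expect_garble (hg : ∀ k i j, |g k i j| ≤ B) (u : InfoStruct K) (σ τ : Garbling) :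
    payoff u g σ τ =
      expect (garbleRight (garbleLeft σ u) τ) (fun x => g x.1 x.2.1 x.2.2) := by
  have hg' (x : K × ℕ × ℕ) : |g x.1 x.2.1 x.2.2| ≤ B := hg _ _ _
  simp only [payoff_eq_expect, garbleLeft, garbleRight, PMF.bind_bind, PMF.bind_map,
    expect_bind _ _ hg', expect_map _ _ hg', Function.comp_def]

lemma payoff_garbleLeft (hg : ∀ k i j, |g k i j| ≤ B) (q : Garbling) (u : InfoStruct K)
    (σ τ : Garbling) :
    payoff (garbleLeft q u) g σ τ = payoff u g (compGarble σ q) τ := by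
  simp only [payoff_eq_expect_garble hg, garbleLeft_garbleLeft]

lemma payoff_garbleRight (hg : ∀ k i j, |g k i j| ≤ B) (u : InfoStruct K) (q : Garbling)
    (σ τ : Garbling) :
    payoff (garbleRight u q) g σ τ = payoff u g σ (compGarble τ q) := by
  simp only [payoff_eq_expect_garble hg, garbleLeft_garbleRight, garbleRight_garbleRight]

lemma abs_payoff_le (hg : ∀ k i j, |g k i j| ≤ B) (u : InfoStruct K) (σ τ : Garbling) :
    |payoff u g σ τ| ≤ B := by
  rw [payoff_eq_expect_garble hg]
  exact abs_expect_le _ fun _ => hg _ _ _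

lemma payoff_le_payoff_add_tv (hg : ∀ k i j, |g k i j| ≤ B) (u v : InfoStruct K)
    (σ τ : Garbling) : payoff u g σ τ ≤ payoff v g σ τ + B * tv u v := by
  rw [payoff_eq_expect, payoff_eq_expect, ← sub_le_iff_le_add']
  exact (le_abs_self _).trans <| abs_expect_sub_expect_le u v fun _ =>
    abs_expect_le _ fun _ => abs_expect_le _ fun _ => hg _ _ _

/-- Player 1 transfers her strategy from `u` to `v`, and player 2 transfers his reply back. -/
lemma val_le_val_add (hg : ∀ k i j, |g k i j| ≤ B) (u v : InfoStruct K) (δ : ℝ)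
    (h : ∀ σ, ∃ σ', ∀ τ', ∃ τ, payoff u g σ τ ≤ payoff v g σ' τ' + δ) :
    val u g ≤ val v g + δ := by
  have payoff_bddBelow (w : InfoStruct K) (σ : Garbling) :
      BddBelow (Set.range fun τ => payoff w g σ τ) :=
    ⟨-B, Set.forall_mem_range.2 fun τ => (abs_le.1 (abs_payoff_le hg w σ τ)).1⟩
  have guarantee_bddAbove : BddAbove (Set.range fun σ => ⨅ τ, payoff v g σ τ) :=
    ⟨B, Set.forall_mem_range.2 fun σ =>
      (ciInf_le (payoff_bddBelow v σ) σ).trans (abs_le.1 (abs_payoff_le hg v σ σ)).2⟩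
  have : Nonempty Garbling := ⟨PMF.pure⟩
  refine ciSup_le fun σ => ?_
  obtain ⟨σ', transfer⟩ := h σ
  have guarantee_le : (⨅ τ, payoff u g σ τ) - δ ≤ ⨅ τ', payoff v g σ' τ' := by
    refine le_ciInf fun τ' => ?_
    obtain ⟨τ, payoff_le⟩ := transfer τ'
    exact sub_le_iff_le_add.2 ((ciInf_le (payoff_bddBelow u σ) τ).trans payoff_le)
  exact sub_le_iff_le_add.1 (guarantee_le.trans (le_ciSup guarantee_bddAbove σ'))

lemma val_garbleLeft_le (hg : ∀ k i j, |g k i j| ≤ B) (q : Garbling) (u : InfoStruct K) :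
    val (garbleLeft q u) g ≤ val u g := by
  rw [← add_zero (val u g)]
  refine val_le_val_add hg _ _ 0 fun σ => ⟨compGarble σ q, fun τ => ⟨τ, ?_⟩⟩
  rw [payoff_garbleLeft hg, add_zero]

lemma val_le_val_garbleRight (hg : ∀ k i j, |g k i j| ≤ B) (u : InfoStruct K) (q : Garbling) :
    val u g ≤ val (garbleRight u q) g := by
  rw [← add_zero (val (garbleRight u q) g)]
  refine val_le_val_add hg _ _ 0 fun σ => ⟨σ, fun τ => ⟨compGarble τ q, ?_⟩⟩
  rw [payoff_garbleRight hg, add_zero]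

lemma val_le_val_add_tv (hg : ∀ k i j, |g k i j| ≤ B) (u v : InfoStruct K) :
    val u g ≤ val v g + B * tv u v :=
  val_le_val_add hg u v _ fun σ => ⟨σ, fun τ => ⟨τ, payoff_le_payoff_add_tv hg u v σ τ⟩⟩

lemma val_le_val_add_tv_garble (hg : ∀ k i j, |g k i j| ≤ B) (u v : InfoStruct K)
    (q₁ q₂ : Garbling) :
    val u g ≤ val v g + B * tv (garbleRight u q₂) (garbleLeft q₁ v) :=
  calc val u g ≤ val (garbleRight u q₂) g := val_le_val_garbleRight hg u q₂
    _ ≤ val (garbleLeft q₁ v) g + B * tv (garbleRight u q₂) (garbleLeft q₁ v) :=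
        val_le_val_add_tv hg _ _
    _ ≤ val v g + B * tv (garbleRight u q₂) (garbleLeft q₁ v) := by
        gcongr
        exact val_garbleLeft_le hg q₁ v

end Garbling

section Knowledge

variable {K : Type}

lemma marg1_apply (u : InfoStruct K) (k : K) (c : ℕ) :
    marg1 u (k, c) = ∑' d, u (k, c, d) :=
  map_apply_eq_tsum_of_range_eq u _ _ (ι := fun d => (k, c, d)) (fun _ _ h => by simpa using h)
    (by ext ⟨_, _, _⟩; simp [eq_comm])

lemma margKD_apply (u : InfoStruct K) (k : K) (d : ℕ) :
    margKD u (k, d) = ∑' c, u (k, c, d) :=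
  map_apply_eq_tsum_of_range_eq u _ _ (ι := fun c => (k, c, d)) (fun _ _ h => by simpa using h)
    (by ext ⟨_, _, _⟩; simp [eq_comm])

lemma map_snd_apply {α β : Type*} (w : PMF (α × β)) (b : β) :
    w.map Prod.snd b = ∑' a, w (a, b) :=
  map_apply_eq_tsum_of_range_eq w _ _ (Prod.mk_left_injective b) (by ext ⟨_, _⟩; simp [eq_comm])

lemma condStateC_eq (u : InfoStruct K) (κ : ℕ → K) (c : ℕ) :
    condStateC u κ c = (marg1 u (κ c, c)).toReal / ((marg1 u).map Prod.snd c).toReal := by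
  simp only [condStateC, map_snd_apply, marg1_apply]

lemma condStateD_eq (u : InfoStruct K) (κ : ℕ → K) (d : ℕ) :
    condStateD u κ d = (margKD u (κ d, d)).toReal / ((margKD u).map Prod.snd d).toReal := by
  simp only [condStateD, map_snd_apply, margKD_apply]

variable {ε : ℝ} {u : InfoStruct K} {κ : ℕ → K}

lemma prob_ne_guess_left_le (h : 1 - ε ≤ prob u {x | 1 - ε ≤ condStateC u κ x.2.1}) :
    prob u {x | x.1 ≠ κ x.2.1} ≤ 2 * ε := by
  have error_le := prob_fst_ne_le (ε := ε) (marg1 u) κ (by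
    simp only [← condStateC_eq]
    rwa [marg1, PMF.map_comp, prob_map])
  rwa [marg1, prob_map] at error_le

lemma prob_ne_guess_right_le (h : 1 - ε ≤ prob u {x | 1 - ε ≤ condStateD u κ x.2.2}) :
    prob u {x | x.1 ≠ κ x.2.2} ≤ 2 * ε := by
  have error_le := prob_fst_ne_le (ε := ε) (margKD u) κ (by
    simp only [← condStateD_eq]
    rwa [margKD, PMF.map_comp, prob_map])
  rwa [margKD, prob_map] at error_le

end Knowledge

section CommonKnowledge

variable {K : Type} {e : K → ℕ}

/-- The structure with state law `μ` in which both players are told the state `k`, under the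
name `e k`. -/
noncomputable def commonKnowledge (e : K → ℕ) (μ : PMF K) : InfoStruct K :=
  μ.map fun k => (k, e k, e k)

lemma exists_garbleRight_commonKnowledge (he : Function.Injective e) (u : InfoStruct K) :
    ∃ q, garbleRight (commonKnowledge e (margK u)) q = u.map fun x => (x.1, e x.1, x.2.2) := by
  have : Nonempty K := u.support_nonempty.to_subtype.map fun x => x.1.1
  obtain ⟨state, state_e⟩ := he.hasLeftInverse
  refine ⟨fun n => (condLaw u Prod.fst (state n)).map fun x => x.2.2, ?_⟩
  rw [← bind_condLaw_map u Prod.fst fun k x => (k, e k, x.2.2)]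
  simp only [garbleRight, commonKnowledge, margK, PMF.bind_map, PMF.map_comp, Function.comp_def,
    state_e _]

lemma exists_garbleLeft_commonKnowledge (he : Function.Injective e) (u : InfoStruct K) :
    ∃ q, garbleLeft q (commonKnowledge e (margK u)) = u.map fun x => (x.1, x.2.1, e x.1) := by
  have : Nonempty K := u.support_nonempty.to_subtype.map fun x => x.1.1
  obtain ⟨state, state_e⟩ := he.hasLeftInverse
  refine ⟨fun n => (condLaw u Prod.fst (state n)).map fun x => x.2.1, ?_⟩
  rw [← bind_condLaw_map u Prod.fst fun k x => (k, x.2.1, e k)]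
  simp only [garbleLeft, commonKnowledge, margK, PMF.bind_map, PMF.map_comp, Function.comp_def,
    state_e _]

lemma garbleLeft_pure (u : InfoStruct K) (f : ℕ → ℕ) :
    garbleLeft (PMF.pure ∘ f) u = u.map fun x => (x.1, f x.2.1, x.2.2) := by
  simp only [garbleLeft, Function.comp_apply, PMF.pure_map]
  rfl

lemma garbleRight_pure (u : InfoStruct K) (f : ℕ → ℕ) :
    garbleRight u (PMF.pure ∘ f) = u.map fun x => (x.1, x.2.1, f x.2.2) := by
  simp only [garbleRight, Function.comp_apply, PMF.pure_map]
  rfl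

variable {g : K → ℕ → ℕ → ℝ} {B : ℝ}

lemma val_commonKnowledge_le (hg : ∀ k i j, |g k i j| ≤ B) (he : Function.Injective e)
    (u : InfoStruct K) (κ : ℕ → K) :
    val (commonKnowledge e (margK u)) g ≤ val u g + B * (2 * prob u {x | x.1 ≠ κ x.2.1}) := by
  have B_nonneg : 0 ≤ B := (abs_nonneg _).trans (hg (κ 0) 0 0)
  obtain ⟨q, hq⟩ := exists_garbleRight_commonKnowledge he u
  refine (val_le_val_add_tv_garble hg _ u (PMF.pure ∘ e ∘ κ) q).trans ?_
  rw [hq, garbleLeft_pure]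
  gcongr
  refine (tv_map_le u _ _).trans ?_
  gcongr
  exact prob_mono u fun x hx hguess => hx (by simp [← hguess])

lemma val_le_val_commonKnowledge (hg : ∀ k i j, |g k i j| ≤ B)
    (he : Function.Injective e) (u : InfoStruct K) (κ : ℕ → K) :
    val u g ≤ val (commonKnowledge e (margK u)) g + B * (2 * prob u {x | x.1 ≠ κ x.2.2}) := by
  have B_nonneg : 0 ≤ B := (abs_nonneg _).trans (hg (κ 0) 0 0)
  obtain ⟨q, hq⟩ := exists_garbleLeft_commonKnowledge he u
  refine (val_le_val_add_tv_garble hg u (commonKnowledge e (margK u)) q (PMF.pure ∘ e ∘ κ)).trans ?_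
  rw [hq, garbleRight_pure]
  gcongr
  refine (tv_map_le u _ _).trans ?_
  gcongr
  exact prob_mono u fun x hx hguess => hx (by simp [← hguess])

lemma IsPayoff.abs_le_one (hg : IsPayoff g) (k : K) (i j : ℕ) : |g k i j| ≤ 1 :=
  abs_le.2 (hg.choose_spec.1 k i j)

end CommonKnowledge

theorem approximate_knowledge_general {K : Type} {ε : ℝ} (u : InfoStruct K) (κC κD : ℕ → K)
    (hC : 1 - ε ≤ prob u {x | 1 - ε ≤ condStateC u κC x.2.1})
    (hD : 1 - ε ≤ prob u {x | 1 - ε ≤ condStateD u κD x.2.2})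
    {e : K → ℕ} (he : Function.Injective e) :
    dVal u (commonKnowledge e (margK u)) ≤ 4 * ε := by
  have errorC := prob_ne_guess_left_le hC
  have errorD := prob_ne_guess_right_le hD
  refine Real.iSup_le (fun ⟨g, hg⟩ => abs_sub_le_iff.2 ⟨?_, ?_⟩) (by
    linarith [prob_nonneg u {x | x.1 ≠ κC x.2.1}])
  · linarith [val_le_val_commonKnowledge hg.abs_le_one he u κD]
  · linarith [val_commonKnowledge_le hg.abs_le_one he u κC]

/-- Approximate knowledge is close to common knowledge: if `u` exhibits
`ε`-knowledge of the state (witnessed by `κ`), and `v` is the common-knowledge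
structure in which both players are told the state (states embedded in the
signal space `ℕ` by an injection `e`), then `d(u,v) ≤ 20ε`. -/
theorem approximate_knowledge (K : Type) [Fintype K]
    (hK : 2 ≤ Fintype.card K) (ε : ℝ) (hε : 0 ≤ ε)
    (u : InfoStruct K) (κ : ℕ → K)
    (h1 : 1 - ε ≤ ∑' x : K × ℕ × ℕ,
      Set.indicator {y : K × ℕ × ℕ | 1 - ε ≤ condStateC u κ y.2.1}
        (fun y => (u y).toReal) x)
    (h2 : 1 - ε ≤ ∑' x : K × ℕ × ℕ,
      Set.indicator {y : K × ℕ × ℕ | 1 - ε ≤ condStateD u κ y.2.2}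
        (fun y => (u y).toReal) x)
    (e : K → ℕ) (he : Function.Injective e) :
    dVal u (u.map (fun x => (x.1, e x.1, e x.1))) ≤ 20 * ε := by
  have sharp : dVal u (commonKnowledge e (margK u)) ≤ 4 * ε :=
    approximate_knowledge_general u κ κ (h1.trans_eq (hasSum_prob _ _).tsum_eq)
      (h2.trans_eq (hasSum_prob _ _).tsum_eq) he
  rw [commonKnowledge, margK, PMF.map_comp] at sharp
  exact sharp.trans (by linarith)

end ValueDistance
end

section
/- Let N be an even positive integer, A = {1,…,N}, and let S_a and S_b be two independent random subsets of A, each uniformly distributed over the collection of subsets of A of cardinality N/2. Then for every γ > 0: P( | |S_a ∩ S_b| − N/4 | ≥ γN ) ≤ (1/2)·e⁴·N·e^{−2γ²N}. -/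
open scoped BigOperators ENNReal

namespace ErdosMarkov

/-- `𝒮_A` : the collection of all subsets of `A = {1,…,N}` of cardinality `N/2`. -/
def SA (N : ℕ) : Finset (Finset ℕ) :=
  (Finset.Icc 1 N).powerset.filter (fun t => t.card = N / 2)

/-!
For a fixed `s ⊆ A`, translation `t ↦ s ∆ t` permutes the subsets of `A`, so the number of `t ⊆ A`
for which `#(s ∆ t)` is far from `#A / 2` is a two-sided binomial tail, which the exponential
moment method bounds by `2 * 2 ^ #A * exp (-2 * r ^ 2 / #A)`. Since
`#(s ∆ t) = #s + #t - 2 * #(s ∩ t)`, this controls `#(s ∩ t)` once `#s` and `#t` are fixed.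
Restricting to the `t` of size `k` divides the count by `(#A).choose k` instead of `2 ^ #A`, which
costs only a linear factor when `k = #A / 2`. The bound is uniform in `s`, so it survives averaging
over an independent random `s` of any law.
-/

section Counting

open Finset
open scoped symmDiff

variable {α : Type*}

theorem sum_powerset_exp_card_sub_half (A : Finset α) (x : ℝ) :
    ∑ u ∈ A.powerset, Real.exp (x * (#u - #A / 2)) = (2 * Real.cosh (x / 2)) ^ #A := by
  have hcosh : 2 * Real.cosh (x / 2) = Real.exp (x / 2) + Real.exp (-(x / 2)) := by
    rw [Real.cosh_eq]
    ring
  rw [hcosh, ← sum_pow_mul_eq_add_pow]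
  refine sum_congr rfl fun u hu => ?_
  rw [← Real.exp_nat_mul, ← Real.exp_nat_mul, ← Real.exp_add,
    Nat.cast_sub (card_le_card (mem_powerset.mp hu))]
  ring_nf

theorem sum_powerset_cosh_card_sub_half_le (A : Finset α) (x : ℝ) :
    ∑ u ∈ A.powerset, Real.cosh (x * (#u - #A / 2)) ≤ 2 ^ #A * Real.exp (x ^ 2 * #A / 8) := by
  calc ∑ u ∈ A.powerset, Real.cosh (x * (#u - #A / 2))
      = (∑ u ∈ A.powerset, Real.exp (x * (#u - #A / 2))
          + ∑ u ∈ A.powerset, Real.exp (-x * (#u - #A / 2))) / 2 := by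
        simp_rw [Real.cosh_eq, ← sum_div, sum_add_distrib, neg_mul]
    _ = 2 ^ #A * Real.cosh (x / 2) ^ #A := by
        rw [sum_powerset_exp_card_sub_half, sum_powerset_exp_card_sub_half, neg_div, Real.cosh_neg,
          mul_pow]
        ring
    _ ≤ 2 ^ #A * Real.exp ((x / 2) ^ 2 / 2) ^ #A := by
        gcongr
        exact Real.cosh_le_exp_half_sq _
    _ = 2 ^ #A * Real.exp (x ^ 2 * #A / 8) := by
        rw [← Real.exp_nat_mul]
        ring_nf

theorem exp_mul_le_two_mul_cosh {c r x : ℝ} (hc : 0 ≤ c) (hr : r ≤ |x|) :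
    Real.exp (c * r) ≤ 2 * Real.cosh (c * x) := by
  calc Real.exp (c * r) ≤ Real.exp |c * x| := by
        rw [abs_mul, abs_of_nonneg hc]
        gcongr
    _ ≤ Real.exp |c * x| + Real.exp (-|c * x|) := by
        linarith [Real.exp_pos (-|c * x|)]
    _ = 2 * Real.cosh (c * x) := by
        rw [← Real.cosh_abs, Real.cosh_eq]
        ring

theorem card_filter_powerset_abs_card_sub_half_le (A : Finset α) {r : ℝ} (hr : 0 ≤ r) :
    (#{u ∈ A.powerset | r ≤ |(#u : ℝ) - #A / 2|} : ℝ)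
      ≤ 2 * 2 ^ #A * Real.exp (-2 * r ^ 2 / #A) := by
  -- `c` minimises the exponent `c ^ 2 * #A / 8 - c * r`
  set c : ℝ := 4 * r / #A with hc
  have chernoff : #{u ∈ A.powerset | r ≤ |(#u : ℝ) - #A / 2|} * Real.exp (c * r)
      ≤ 2 * (2 ^ #A * Real.exp (c ^ 2 * #A / 8)) := by
    calc #{u ∈ A.powerset | r ≤ |(#u : ℝ) - #A / 2|} * Real.exp (c * r)
        ≤ ∑ u ∈ A.powerset with r ≤ |(#u : ℝ) - #A / 2|,
            2 * Real.cosh (c * (#u - #A / 2)) := by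
          rw [← nsmul_eq_mul]
          exact card_nsmul_le_sum _ _ _ fun u hu =>
            exp_mul_le_two_mul_cosh (by positivity) (mem_filter.mp hu).2
      _ ≤ ∑ u ∈ A.powerset, 2 * Real.cosh (c * (#u - #A / 2)) :=
          sum_le_sum_of_subset_of_nonneg (filter_subset _ _) fun u _ _ =>
            mul_nonneg zero_le_two (Real.cosh_pos _).le
      _ ≤ 2 * (2 ^ #A * Real.exp (c ^ 2 * #A / 8)) := by
          rw [← mul_sum]
          gcongr
          exact sum_powerset_cosh_card_sub_half_le A c
  have exponent : c ^ 2 * #A / 8 = -2 * r ^ 2 / #A + c * r := by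
    rw [hc]
    rcases eq_or_ne (#A : ℝ) 0 with hA | hA
    · simp [hA]
    · field_simp
      ring
  rw [exponent, Real.exp_add] at chernoff
  refine le_of_mul_le_mul_right ?_ (Real.exp_pos (c * r))
  linarith

theorem card_filter_powersetCard_abs_card_symmDiff_sub_half_le [DecidableEq α] {A s : Finset α}
    (hs : s ⊆ A) (k : ℕ) {r : ℝ} (hr : 0 ≤ r) :
    (#{t ∈ A.powersetCard k | r ≤ |(#(s ∆ t) : ℝ) - #A / 2|} : ℝ)
      ≤ 2 * 2 ^ #A * Real.exp (-2 * r ^ 2 / #A) := by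
  refine le_trans ?_ (card_filter_powerset_abs_card_sub_half_le A hr)
  refine Nat.cast_le.mpr (card_le_card_of_injOn (s ∆ ·) (fun t ht => ?_)
    (symmDiff_right_injective s).injOn)
  simp only [coe_filter, mem_powersetCard, mem_powerset, Set.mem_ofPred_eq] at ht ⊢
  exact ⟨symmDiff_subset_union.trans (union_subset hs ht.1.1), ht.2⟩

theorem card_symmDiff_add_two_mul_card_inter [DecidableEq α] (s t : Finset α) :
    #(s ∆ t) + 2 * #(s ∩ t) = #s + #t := by
  have hdisj : Disjoint (s \ t) (t \ s) := disjoint_sdiff_sdiff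
  have hs := card_sdiff_add_card_inter s t
  have ht := card_sdiff_add_card_inter t s
  rw [inter_comm] at ht
  rw [symmDiff_def, sup_eq_union, card_union_of_disjoint hdisj]
  omega

theorem abs_card_symmDiff_sub_half [DecidableEq α] (s t : Finset α) (x : ℝ) :
    |(#(s ∆ t) : ℝ) - x / 2| = 2 * |(#(s ∩ t) : ℝ) - ((#s + #t) / 2 - x / 4)| := by
  have hcard : (#(s ∆ t) : ℝ) + 2 * #(s ∩ t) = #s + #t := by
    exact_mod_cast card_symmDiff_add_two_mul_card_inter s t
  have hcentre : (#(s ∆ t) : ℝ) - x / 2 = -2 * (#(s ∩ t) - ((#s + #t) / 2 - x / 4)) := by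
    linear_combination hcard
  rw [hcentre, abs_mul, abs_neg, abs_two]

theorem SA_eq_powersetCard (N : ℕ) : SA N = (Icc 1 N).powersetCard (N / 2) :=
  powersetCard_eq_filter.symm

theorem SA_nonempty (N : ℕ) : (SA N).Nonempty := by
  rw [SA_eq_powersetCard, powersetCard_nonempty, Nat.card_Icc]
  exact Nat.div_le_self N 2

theorem two_pow_div_choose_half_le {N : ℕ} (hNe : Even N) (hN : 0 < N) :
    (2 : ℝ) ^ N / N.choose (N / 2) ≤ N := by
  obtain ⟨n, rfl⟩ := hNe.two_dvd
  have hn : 0 < n := by omega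
  rw [Nat.mul_div_cancel_left n two_pos, ← Nat.centralBinom_eq_two_mul_choose,
    div_le_iff₀ (by exact_mod_cast n.centralBinom_pos), pow_mul]
  exact_mod_cast Nat.four_pow_le_two_mul_self_mul_centralBinom n hn

theorem two_mul_two_pow_div_choose_half_mul_exp_le {N : ℕ} (hNe : Even N) (hN : 0 < N) (γ : ℝ) :
    2 * ((2 : ℝ) ^ N / N.choose (N / 2)) * Real.exp (-8 * γ ^ 2 * N)
      ≤ 1 / 2 * Real.exp 4 * N * Real.exp (-2 * γ ^ 2 * N) := by
  have hconst : 2 ≤ 1 / 2 * Real.exp 4 := by linarith [Real.add_one_le_exp 4]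
  have hrate : -8 * γ ^ 2 ≤ -2 * γ ^ 2 := by linarith [sq_nonneg γ]
  gcongr
  exact two_pow_div_choose_half_le hNe hN

end Counting

section Probability

open Finset MeasureTheory
open scoped symmDiff

variable {Ω α β : Type*} [MeasurableSpace Ω] {P : Measure Ω} [IsProbabilityMeasure P]

theorem ae_mem_of_measure_fiber_eq_inv_card {X : Ω → α} {F : Finset α} (hF : F.Nonempty)
    (hX : ∀ a ∈ F, MeasurableSet (X ⁻¹' {a})) (huni : ∀ a ∈ F, P (X ⁻¹' {a}) = (#F : ENNReal)⁻¹) :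
    ∀ᵐ ω ∂P, X ω ∈ F := by
  have hunion : {ω | X ω ∈ F} = ⋃ a ∈ F, X ⁻¹' {a} := by
    ext ω
    simp
  have hmeas : MeasurableSet {ω | X ω ∈ F} := hunion ▸ F.measurableSet_biUnion hX
  refine (mem_ae_iff_prob_eq_one hmeas).mpr ?_
  rw [hunion, measure_biUnion_finset (Set.pairwiseDisjoint_fiber X F) hX, sum_congr rfl huni,
    sum_const, nsmul_eq_mul]
  exact ENNReal.mul_inv_cancel (by simpa using hF.ne_empty) (by simp)

theorem measureReal_rel_le_of_forall_sum_le {X : Ω → α} {Y : Ω → β} {F : Finset α} {G : Finset β}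
    (hXF : ∀ᵐ ω ∂P, X ω ∈ F) (hYG : ∀ᵐ ω ∂P, Y ω ∈ G)
    (hX : ∀ a ∈ F, MeasurableSet (X ⁻¹' {a}))
    (hindep : ∀ a b, P (X ⁻¹' {a} ∩ Y ⁻¹' {b}) = P (X ⁻¹' {a}) * P (Y ⁻¹' {b}))
    {R : α → β → Prop} [∀ a, DecidablePred (R a)] {c : ℝ} (hc : 0 ≤ c)
    (hR : ∀ a ∈ F, ∑ b ∈ G with R a b, P.real (Y ⁻¹' {b}) ≤ c) :
    P.real {ω | R (X ω) (Y ω)} ≤ c := by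
  have hcover : {ω | R (X ω) (Y ω)} ≤ᵐ[P]
      (⋃ a ∈ F, ⋃ b ∈ G.filter (R a), X ⁻¹' {a} ∩ Y ⁻¹' {b} : Set Ω) := by
    filter_upwards [hXF, hYG] with ω hXω hYω hω
    exact Set.mem_biUnion hXω (Set.mem_biUnion (mem_filter.mpr ⟨hYω, hω⟩) ⟨rfl, rfl⟩)
  calc P.real {ω | R (X ω) (Y ω)}
      ≤ P.real (⋃ a ∈ F, ⋃ b ∈ G.filter (R a), X ⁻¹' {a} ∩ Y ⁻¹' {b}) :=
        ENNReal.toReal_mono (measure_ne_top _ _) (measure_mono_ae hcover)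
    _ ≤ ∑ a ∈ F, ∑ b ∈ G with R a b, P.real (X ⁻¹' {a} ∩ Y ⁻¹' {b}) :=
        (measureReal_biUnion_finset_le _ _).trans
          (sum_le_sum fun a _ => measureReal_biUnion_finset_le _ _)
    _ = ∑ a ∈ F, P.real (X ⁻¹' {a}) * ∑ b ∈ G with R a b, P.real (Y ⁻¹' {b}) := by
        simp only [measureReal_def, hindep, ENNReal.toReal_mul, mul_sum]
    _ ≤ ∑ a ∈ F, P.real (X ⁻¹' {a}) * c := by
        gcongr with a ha
        exact hR a ha
    _ = P.real (⋃ a ∈ F, X ⁻¹' {a}) * c := by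
        rw [← sum_mul, measureReal_biUnion_finset (Set.pairwiseDisjoint_fiber X F) hX]
    _ ≤ c := mul_le_of_le_one_left hc measureReal_le_one

variable [DecidableEq α] {A : Finset α} {Sa Sb : Ω → Finset α}

theorem measureReal_abs_card_symmDiff_sub_half_le {k : ℕ} (hk : k ≤ #A)
    (hmA : ∀ s, MeasurableSet (Sa ⁻¹' {s})) (hmB : ∀ t, MeasurableSet (Sb ⁻¹' {t}))
    (hSa : ∀ᵐ ω ∂P, Sa ω ⊆ A)
    (huniB : ∀ t ∈ A.powersetCard k, P (Sb ⁻¹' {t}) = (#(A.powersetCard k) : ENNReal)⁻¹)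
    (hindep : ∀ s t, P (Sa ⁻¹' {s} ∩ Sb ⁻¹' {t}) = P (Sa ⁻¹' {s}) * P (Sb ⁻¹' {t}))
    {r : ℝ} (hr : 0 ≤ r) :
    P.real {ω | r ≤ |(#(Sa ω ∆ Sb ω) : ℝ) - #A / 2|}
      ≤ 2 * (2 ^ #A / (#A).choose k) * Real.exp (-2 * r ^ 2 / #A) := by
  have hSb : ∀ᵐ ω ∂P, Sb ω ∈ A.powersetCard k :=
    ae_mem_of_measure_fiber_eq_inv_card (powersetCard_nonempty.mpr hk) (fun t _ => hmB t) huniB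
  refine measureReal_rel_le_of_forall_sum_le
    (R := fun s t => r ≤ |(#(s ∆ t) : ℝ) - #A / 2|)
    (hSa.mono fun ω => mem_powerset.mpr) hSb (fun s _ => hmA s) hindep (by positivity)
    fun s hs => ?_
  have hterm : ∀ t ∈ A.powersetCard k, P.real (Sb ⁻¹' {t}) = ((#A).choose k : ℝ)⁻¹ := fun t ht => by
    rw [measureReal_def, huniB t ht, card_powersetCard, ENNReal.toReal_inv, ENNReal.toReal_natCast]
  calc ∑ t ∈ A.powersetCard k with r ≤ |(#(s ∆ t) : ℝ) - #A / 2|, P.real (Sb ⁻¹' {t})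
      = #{t ∈ A.powersetCard k | r ≤ |(#(s ∆ t) : ℝ) - #A / 2|} * ((#A).choose k : ℝ)⁻¹ := by
        rw [sum_congr rfl fun t ht => hterm t (mem_filter.mp ht).1, sum_const, nsmul_eq_mul]
    _ ≤ 2 * 2 ^ #A * Real.exp (-2 * r ^ 2 / #A) * ((#A).choose k : ℝ)⁻¹ := by
        gcongr
        exact card_filter_powersetCard_abs_card_symmDiff_sub_half_le (mem_powerset.mp hs) k hr
    _ = 2 * (2 ^ #A / (#A).choose k) * Real.exp (-2 * r ^ 2 / #A) := by
        ring

theorem intersection_concentration_general {m k : ℕ} (hk : k ≤ #A)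
    (hmA : ∀ s, MeasurableSet (Sa ⁻¹' {s})) (hmB : ∀ t, MeasurableSet (Sb ⁻¹' {t}))
    (hSa : ∀ᵐ ω ∂P, Sa ω ∈ A.powersetCard m)
    (huniB : ∀ t ∈ A.powersetCard k, P (Sb ⁻¹' {t}) = (#(A.powersetCard k) : ENNReal)⁻¹)
    (hindep : ∀ s t, P (Sa ⁻¹' {s} ∩ Sb ⁻¹' {t}) = P (Sa ⁻¹' {s}) * P (Sb ⁻¹' {t}))
    {γ : ℝ} (hγ : 0 ≤ γ) :
    P.real {ω | γ * #A ≤ |(#(Sa ω ∩ Sb ω) : ℝ) - ((m + k) / 2 - #A / 4)|}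
      ≤ 2 * (2 ^ #A / (#A).choose k) * Real.exp (-8 * γ ^ 2 * #A) := by
  have hSb : ∀ᵐ ω ∂P, Sb ω ∈ A.powersetCard k :=
    ae_mem_of_measure_fiber_eq_inv_card (powersetCard_nonempty.mpr hk) (fun t _ => hmB t) huniB
  have hsubset : {ω | γ * #A ≤ |(#(Sa ω ∩ Sb ω) : ℝ) - ((m + k) / 2 - #A / 4)|} ≤ᵐ[P]
      {ω | 2 * γ * #A ≤ |(#(Sa ω ∆ Sb ω) : ℝ) - #A / 2|} := by
    filter_upwards [hSa, hSb] with ω hωa hωb (hω : γ * #A ≤ _)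
    change 2 * γ * #A ≤ |_|
    rw [abs_card_symmDiff_sub_half, (mem_powersetCard.mp hωa).2, (mem_powersetCard.mp hωb).2]
    linarith
  have hexponent : -2 * (2 * γ * #A) ^ 2 / #A = -8 * γ ^ 2 * #A := by
    rcases eq_or_ne (#A : ℝ) 0 with hA | hA
    · simp [hA]
    · field_simp
      ring
  calc P.real {ω | γ * #A ≤ |(#(Sa ω ∩ Sb ω) : ℝ) - ((m + k) / 2 - #A / 4)|}
      ≤ P.real {ω | 2 * γ * #A ≤ |(#(Sa ω ∆ Sb ω) : ℝ) - #A / 2|} :=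
        ENNReal.toReal_mono (measure_ne_top _ _) (measure_mono_ae hsubset)
    _ ≤ 2 * (2 ^ #A / (#A).choose k) * Real.exp (-2 * (2 * γ * #A) ^ 2 / #A) :=
        measureReal_abs_card_symmDiff_sub_half_le hk hmA hmB
          (hSa.mono fun ω h => (mem_powersetCard.mp h).1) huniB hindep (by positivity)
    _ = 2 * (2 ^ #A / (#A).choose k) * Real.exp (-8 * γ ^ 2 * #A) := by rw [hexponent]

end Probability

/-- Lemma: if `S_a, S_b` are two independent random subsets of `A = {1,…,N}`,
each uniformly distributed over the subsets of cardinality `N/2`, then for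
every `γ > 0`, `P(| |S_a ∩ S_b| − N/4 | ≥ γN) ≤ (1/2)·e⁴·N·e^{−2γ²N}`. -/
theorem intersection_concentration (N : ℕ) (hNe : Even N) (hN : 0 < N)
    (Ω : Type) [MeasurableSpace Ω] (P : MeasureTheory.Measure Ω)
    [MeasureTheory.IsProbabilityMeasure P]
    (Sa Sb : Ω → Finset ℕ)
    (hmA : ∀ s : Finset ℕ, MeasurableSet (Sa ⁻¹' {s}))
    (hmB : ∀ s : Finset ℕ, MeasurableSet (Sb ⁻¹' {s}))
    (huniA : ∀ s ∈ SA N, P (Sa ⁻¹' {s}) = ((SA N).card : ENNReal)⁻¹)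
    (huniB : ∀ s ∈ SA N, P (Sb ⁻¹' {s}) = ((SA N).card : ENNReal)⁻¹)
    (hindep : ∀ s t : Finset ℕ,
      P (Sa ⁻¹' {s} ∩ Sb ⁻¹' {t}) = P (Sa ⁻¹' {s}) * P (Sb ⁻¹' {t}))
    (γ : ℝ) (hγ : 0 < γ) :
    (P {ω | γ * N ≤ |((Sa ω ∩ Sb ω).card : ℝ) - N / 4|}).toReal
      ≤ (1 / 2) * Real.exp 4 * N * Real.exp (-2 * γ ^ 2 * N) := by
  have hSa : ∀ᵐ ω ∂P, Sa ω ∈ SA N :=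
    ae_mem_of_measure_fiber_eq_inv_card (SA_nonempty N) (fun s _ => hmA s) huniA
  have hcentre : (N : ℝ) / 4 = ((N / 2 : ℕ) + (N / 2 : ℕ)) / 2 - N / 4 := by
    rw [Nat.cast_div_charZero hNe.two_dvd]
    ring
  rw [SA_eq_powersetCard] at hSa huniB
  have htail := intersection_concentration_general (by simpa using Nat.div_le_self N 2)
    hmA hmB hSa huniB hindep hγ.le
  rw [Nat.card_Icc, Nat.add_sub_cancel, ← hcentre] at htail
  exact htail.trans (two_mul_two_pow_div_choose_half_mul_exp_le hNe hN γ)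

end ErdosMarkov
end
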